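/- Let (J,Q,1) be a weak quadratic Jordan algebra over a field k, let a ∈ J be invertible and x ∈ J. Then V_{x,a^{-1}} = V_{a, x·Q_a^{-1}} = Q_a^{-1} Q_{x,a} as endomorphisms of J. -/

import Mathlib

/-- A weak quadratic Jordan algebra `(J, Q, 1)` over a field `k`.
Endomorphisms act on the right: `x·Q_a` is `Q a x`; a paper product `A B`
(apply `A`, then `B`) corresponds to the Mathlib product `B * A`. -/
structure WeakQuadraticJordan (k J : Type*) [Field k] [AddCommGroup J]
    [Module k J] where
  Q : J → Module.End k J
  one : J
  one_ne_zero : one ≠ 0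
  Q_smul : ∀ (t : k) (a : J), Q (t • a) = (t ^ 2) • Q a
  Qbil : J →ₗ[k] J →ₗ[k] Module.End k J
  Qbil_apply : ∀ a b : J, Qbil a b = Q (a + b) - Q a - Q b
  QJ1 : Q one = 1
  QJ2 : ∀ a b x : J, Qbil a (Q a x) b = Q a (Qbil b x a)
  QJ3 : ∀ a b : J, Q (Q a b) = Q a * Q b * Q a

namespace WeakQuadraticJordan

variable {k J : Type*} [Field k] [AddCommGroup J] [Module k J]

/-- `V W a b` is the endomorphism `V_{a,b} : x ↦ b·Q_{a,x}`. -/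
def V (W : WeakQuadraticJordan k J) (a b : J) : Module.End k J where
  toFun x := W.Qbil a x b
  map_add' x y := by simp
  map_smul' t x := by simp

/-- `δ` is an `ε`-derivation: `δ(a·Q_b) = ε·δ(a)·Q_b + a·Q_{b,δ(b)}`. -/
def IsEpsDerivation (W : WeakQuadraticJordan k J) (ε : k) (δ : Module.End k J) : Prop :=
  ∀ a b : J, δ (W.Q b a) = ε • W.Q b (δ a) + W.Qbil b (δ b) a

/-- Every nonzero element is invertible (`Q_a` is a unit of `End k J`). -/
def IsDivision (W : WeakQuadraticJordan k J) : Prop :=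
  ∀ a : J, a ≠ 0 → IsUnit (W.Q a)

end WeakQuadraticJordan


/-!
QJ2 reads `Q_{a, Q_a c} b = Q_a (Q_{b,c} a)` (operators acting on the left), and its right side is
symmetric in `b` and `c`; hence `Q_{a, Q_a c} b = Q_{a, Q_a b} c`. Substituting `b = Q_a⁻¹ x` and
`c = Q_a⁻¹ w` gives the second identity. The polarization `Q_{Q_a b, Q_a c} = Q_a Q_{b,c} Q_a` of
QJ3, with the same `b`, `c` and applied to `a⁻¹`, gives `Q_{x,w} a⁻¹ = Q_a (Q_{b,c} a)`, because
`Q_a a⁻¹ = a`; comparison with QJ2 gives the first identity.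
-/

namespace WeakQuadraticJordan

variable {k J : Type*} [Field k] [AddCommGroup J] [Module k J]

theorem Qbil_comm (W : WeakQuadraticJordan k J) (a b : J) : W.Qbil a b = W.Qbil b a := by
  rw [W.Qbil_apply, W.Qbil_apply, add_comm a b]
  abel

/-- The polarization of QJ3 in its second argument. -/
theorem Qbil_Q_Q (W : WeakQuadraticJordan k J) (a b c : J) :
    W.Qbil (W.Q a b) (W.Q a c) = W.Q a * W.Qbil b c * W.Q a := by
  rw [W.Qbil_apply, W.Qbil_apply, ← map_add, W.QJ3, W.QJ3, W.QJ3]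
  noncomm_ring

end WeakQuadraticJordan

/-- For `a` invertible and `x ∈ J`:
`V_{x,a⁻¹} = V_{a, x·Q_a⁻¹} = Q_a⁻¹ Q_{x,a}`.
(Paper products `A B` = apply `A` then `B` = Mathlib `B * A`.) -/
theorem V_inv_identities {k J : Type*} [Field k] [AddCommGroup J] [Module k J]
    (W : WeakQuadraticJordan k J) (a : J) (ha : IsUnit (W.Q a)) (x : J) :
    W.V x ((↑ha.unit⁻¹ : Module.End k J) a)
        = W.V a ((↑ha.unit⁻¹ : Module.End k J) x) ∧
      W.V a ((↑ha.unit⁻¹ : Module.End k J) x)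
        = W.Qbil x a * (↑ha.unit⁻¹ : Module.End k J) := by
  have hinv : ∀ z : J, W.Q a ((↑ha.unit⁻¹ : Module.End k J) z) = z := fun z => by
    rw [← Module.End.mul_apply, IsUnit.mul_val_inv, Module.End.one_apply]
  constructor
  · ext w
    change W.Qbil x w _ = W.Qbil a w _
    have h3 := LinearMap.congr_fun (W.Qbil_Q_Q a ((↑ha.unit⁻¹ : Module.End k J) x)
      ((↑ha.unit⁻¹ : Module.End k J) w)) ((↑ha.unit⁻¹ : Module.End k J) a)
    have h2 := W.QJ2 a ((↑ha.unit⁻¹ : Module.End k J) x) ((↑ha.unit⁻¹ : Module.End k J) w)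
    simp only [Module.End.mul_apply, hinv] at h3 h2
    rw [h3, h2]
  · ext w
    change W.Qbil a w _ = W.Qbil x a _
    have h1 := W.QJ2 a ((↑ha.unit⁻¹ : Module.End k J) x) ((↑ha.unit⁻¹ : Module.End k J) w)
    have h2 := W.QJ2 a ((↑ha.unit⁻¹ : Module.End k J) w) ((↑ha.unit⁻¹ : Module.End k J) x)
    rw [hinv] at h1 h2
    rw [h1, W.Qbil_comm x a, h2, W.Qbil_comm ((↑ha.unit⁻¹ : Module.End k J) x)]
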